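/- arXiv:2212.14756 — 16 statements merged into one kernel-verified Lean document; each statement's English description precedes it below -/
import Mathlib

section
/- Let (A, g, h, f, p) be a tense H-algebra. Then for all x, y ∈ A: (T11) g(x) ≤ y if and only if h(y) ≤ x; and (T12) x ≤ p(y) if and only if y ≤ f(x). -/
structure IsTenseH {A : Type*} [HeytingAlgebra A] (g h f p : A → A) : Prop where
  t1g : g ⊤ = ⊥
  t1h : h ⊤ = ⊥
  t2f : f ⊥ = ⊤
  t2p : p ⊥ = ⊤
  t3g : ∀ x y : A, g (x ⊓ y) = g x ⊔ g y
  t3h : ∀ x y : A, h (x ⊓ y) = h x ⊔ h y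
  t4f : ∀ x y : A, f (x ⊔ y) = f x ⊓ f y
  t4p : ∀ x y : A, p (x ⊔ y) = p x ⊓ p y
  t5gh : ∀ x : A, g (h x) ≤ x
  t5hg : ∀ x : A, h (g x) ≤ x
  t6pf : ∀ x : A, x ≤ p (f x)
  t6fp : ∀ x : A, x ≤ f (p x)
  t7g : ∀ x y : A, g x ⊓ f y ≤ g (x ⊔ y)
  t7h : ∀ x y : A, h x ⊓ p y ≤ h (x ⊔ y)
  t8f : ∀ x y : A, f (x ⊓ y) ≤ f x ⊔ g y
  t8p : ∀ x y : A, p (x ⊓ y) ≤ p x ⊔ h y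

def IsLatFilter {A : Type*} [HeytingAlgebra A] (F : Set A) : Prop :=
  F.Nonempty ∧ (∀ x y : A, x ∈ F → x ≤ y → y ∈ F) ∧ (∀ x y : A, x ∈ F → y ∈ F → x ⊓ y ∈ F)

def IsLatIdeal {A : Type*} [HeytingAlgebra A] (I : Set A) : Prop :=
  I.Nonempty ∧ (∀ x y : A, x ∈ I → y ≤ x → y ∈ I) ∧ (∀ x y : A, x ∈ I → y ∈ I → x ⊔ y ∈ I)

def IsPrimeFilter {A : Type*} [HeytingAlgebra A] (F : Set A) : Prop :=
  IsLatFilter F ∧ (⊥ : A) ∉ F ∧ ∀ x y : A, x ⊔ y ∈ F → x ∈ F ∨ y ∈ F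

def IsNegTenseFilter {A : Type*} [HeytingAlgebra A] (g h f p : A → A) (F : Set A) : Prop :=
  IsLatFilter F ∧
    ∀ u ∈ ({g, h, f, p} : Set (A → A)), ∀ x y : A, x ⇨ y ∈ F → u y ⇨ u x ∈ F

def thetaF {A : Type*} [HeytingAlgebra A] (F : Set A) (x y : A) : Prop :=
  (x ⇨ y) ⊓ (y ⇨ x) ∈ F

def IsTenseCongruence {A : Type*} [HeytingAlgebra A] (g h f p : A → A)
    (θ : A → A → Prop) : Prop :=
  Equivalence θ ∧
    (∀ x₁ y₁ x₂ y₂ : A, θ x₁ y₁ → θ x₂ y₂ → θ (x₁ ⊓ x₂) (y₁ ⊓ y₂)) ∧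
    (∀ x₁ y₁ x₂ y₂ : A, θ x₁ y₁ → θ x₂ y₂ → θ (x₁ ⊔ x₂) (y₁ ⊔ y₂)) ∧
    (∀ x₁ y₁ x₂ y₂ : A, θ x₁ y₁ → θ x₂ y₂ → θ (x₁ ⇨ x₂) (y₁ ⇨ y₂)) ∧
    ∀ u ∈ ({g, h, f, p} : Set (A → A)), ∀ x y : A, θ x y → θ (u x) (u y)

def Nop {A : Type*} [HeytingAlgebra A] (g h : A → A) (a : A) : A :=
  (g a ⇨ ⊥) ⊓ (h a ⇨ ⊥)

def NIter {A : Type*} [HeytingAlgebra A] (N : A → A) : ℕ → A → A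
  | 0, a => a
  | n + 1, a => N (NIter N n a)

def NPar {A : Type*} [HeytingAlgebra A] (N : A → A) : ℕ → A → A
  | 0, a => NIter N 0 a
  | k + 1, a => NPar N k a ⊓ NIter N (k + 1) a

theorem stmt1 {A : Type*} [HeytingAlgebra A] (g h f p : A → A)
    (H : IsTenseH g h f p) :
    (∀ x y : A, g x ≤ y ↔ h y ≤ x) ∧ (∀ x y : A, x ≤ p y ↔ y ≤ f x) := by
  have ag : ∀ a b : A, a ≤ b → g b ≤ g a := fun a b hab => by
    have := H.t3g a b
    rw [inf_eq_left.mpr hab] at this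
    rw [this]; exact le_sup_right
  have ah : ∀ a b : A, a ≤ b → h b ≤ h a := fun a b hab => by
    have := H.t3h a b
    rw [inf_eq_left.mpr hab] at this
    rw [this]; exact le_sup_right
  have af : ∀ a b : A, a ≤ b → f b ≤ f a := fun a b hab => by
    have := H.t4f a b
    rw [sup_eq_right.mpr hab] at this
    rw [this]; exact inf_le_left
  have ap : ∀ a b : A, a ≤ b → p b ≤ p a := fun a b hab => by
    have := H.t4p a b
    rw [sup_eq_right.mpr hab] at this
    rw [this]; exact inf_le_left
  refine ⟨fun x y => ⟨fun hx => (ah _ _ hx).trans (H.t5hg x),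
    fun hy => (ag _ _ hy).trans (H.t5gh y)⟩,
    fun x y => ⟨fun hx => (H.t6fp y).trans (af _ _ hx),
    fun hy => (H.t6pf x).trans (ap _ _ hy)⟩⟩
end

section
/- Let (A, g, h, f, p) be a tense H-algebra. Then for all x, y ∈ A: (T13) h((g(x) ⇨ y) ⇨ y) ≤ x and g((h(x) ⇨ y) ⇨ y) ≤ x; and (T14) y ≤ f(x ⊓ p(y)) and y ≤ p(x ⊓ f(y)), where ⇨ denotes Heyting implication. -/
theorem stmt2 {A : Type*} [HeytingAlgebra A] (g h f p : A → A)
    (H : IsTenseH g h f p) :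
    (∀ x y : A, h ((g x ⇨ y) ⇨ y) ≤ x) ∧ (∀ x y : A, g ((h x ⇨ y) ⇨ y) ≤ x) ∧
      (∀ x y : A, y ≤ f (x ⊓ p y)) ∧ (∀ x y : A, y ≤ p (x ⊓ f y)) := by
  have hh : ∀ a b : A, a ≤ b → h b ≤ h a := fun a b hab => by
    have e := H.t3h a b
    rw [inf_eq_left.mpr hab] at e
    rw [e]; exact le_sup_right
  have hg : ∀ a b : A, a ≤ b → g b ≤ g a := fun a b hab => by
    have e := H.t3g a b
    rw [inf_eq_left.mpr hab] at e
    rw [e]; exact le_sup_right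
  have hf : ∀ a b : A, a ≤ b → f b ≤ f a := fun a b hab => by
    have e := H.t4f a b
    rw [sup_eq_right.mpr hab] at e
    rw [e]; exact inf_le_left
  have hp : ∀ a b : A, a ≤ b → p b ≤ p a := fun a b hab => by
    have e := H.t4p a b
    rw [sup_eq_right.mpr hab] at e
    rw [e]; exact inf_le_left
  have hi : ∀ a y : A, a ≤ (a ⇨ y) ⇨ y := fun a y => by
    rw [le_himp_iff]; exact inf_himp_le
  exact ⟨fun x y => (hh _ _ (hi _ _)).trans (H.t5hg x),
    fun x y => (hg _ _ (hi _ _)).trans (H.t5gh x),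
    fun x y => (H.t6fp y).trans (hf _ _ inf_le_right),
    fun x y => (H.t6pf y).trans (hp _ _ inf_le_right)⟩
end

section
/- Let X be a set, R a binary relation on X, and R⁻¹ its converse. Define operators on the powerset of X by g_R(U) = {x ∈ X : ∃y, R x y and y ∉ U}, h_R(U) = {x ∈ X : ∃y, R y x and y ∉ U}, f_R(U) = {x ∈ X : ∀y, R x y implies y ∉ U}, p_R(U) = {x ∈ X : ∀y, R y x implies y ∉ U}. Then these four operators on the Heyting algebra of subsets of X satisfy all the tense H-algebra axioms (T1)–(T8): g_R(X) = ∅ = h_R(X); f_R(∅) = X = p_R(∅); g_R(U ∩ V) = g_R(U) ∪ g_R(V) and h_R(U ∩ V) = h_R(U) ∪ h_R(V); f_R(U ∪ V) = f_R(U) ∩ f_R(V) and p_R(U ∪ V) = p_R(U) ∩ p_R(V); g_R(h_R(U)) ⊆ U and h_R(g_R(U)) ⊆ U; U ⊆ p_R(f_R(U)) and U ⊆ f_R(p_R(U)); g_R(U) ∩ f_R(V) ⊆ g_R(U ∪ V) and h_R(U) ∩ p_R(V) ⊆ h_R(U ∪ V); f_R(U ∩ V) ⊆ f_R(U) ∪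 g_R(V) and p_R(U ∩ V) ⊆ p_R(U) ∪ h_R(V). -/
def gR {α : Type*} (R : α → α → Prop) (U : Set α) : Set α :=
  {x | ∃ y, R x y ∧ y ∉ U}

def hR {α : Type*} (R : α → α → Prop) (U : Set α) : Set α :=
  {x | ∃ y, R y x ∧ y ∉ U}

def fR {α : Type*} (R : α → α → Prop) (U : Set α) : Set α :=
  {x | ∀ y, R x y → y ∉ U}

def pR {α : Type*} (R : α → α → Prop) (U : Set α) : Set α :=
  {x | ∀ y, R y x → y ∉ U}

theorem stmt3 {α : Type*} (R : α → α → Prop) :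
    IsTenseH (A := Set α) (gR R) (hR R) (fR R) (pR R) := by
  constructor
  · ext a; simp [gR]
  · ext a; simp [hR]
  · ext a; simp [fR]
  · ext a; simp [pR]
  · intro x y; ext a; simp only [gR, Set.mem_setOf_eq, Set.inf_eq_inter, Set.sup_eq_union, Set.mem_inter_iff, Set.mem_union]; grind
  · intro x y; ext a; simp only [hR, Set.mem_setOf_eq, Set.inf_eq_inter, Set.sup_eq_union, Set.mem_inter_iff, Set.mem_union]; grind
  · intro x y; ext a; simp only [fR, Set.mem_setOf_eq, Set.inf_eq_inter, Set.sup_eq_union, Set.mem_inter_iff, Set.mem_union]; grind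
  · intro x y; ext a; simp only [pR, Set.mem_setOf_eq, Set.inf_eq_inter, Set.sup_eq_union, Set.mem_inter_iff, Set.mem_union]; grind
  · rintro x a ⟨b, hb, hn⟩
    by_contra h
    exact hn ⟨a, hb, h⟩
  · rintro x a ⟨b, hb, hn⟩
    by_contra h
    exact hn ⟨a, hb, h⟩
  · intro x a ha b hb h
    exact h a hb ha
  · intro x a ha b hb h
    exact h a hb ha
  · rintro x y a ⟨⟨b, hb, hn⟩, hf⟩
    exact ⟨b, hb, fun h => h.elim hn (hf b hb)⟩
  · rintro x y a ⟨⟨b, hb, hn⟩, hf⟩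
    exact ⟨b, hb, fun h => h.elim hn (hf b hb)⟩
  · intro x y a ha
    by_cases hg : a ∈ gR R y
    · exact Or.inr hg
    · refine Or.inl fun b hb hx => hg ⟨b, hb, fun hy => ha b hb ⟨hx, hy⟩⟩
  · intro x y a ha
    by_cases hg : a ∈ hR R y
    · exact Or.inr hg
    · refine Or.inl fun b hb hx => hg ⟨b, hb, fun hy => ha b hb ⟨hx, hy⟩⟩
end

section
/- Let (A, g, h, f, p) be a tense H-algebra and S ⊆ A. If S is a prime filter of A, then the complements A \ g⁻¹(S) = {x : g(x) ∉ S} and A \ h⁻¹(S) = {x : h(x) ∉ S} are filters of A. -/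
theorem stmt5_aux {A : Type*} [HeytingAlgebra A] (g : A → A) (h1 : g ⊤ = ⊥)
    (h3 : ∀ x y : A, g (x ⊓ y) = g x ⊔ g y) (S : Set A) (hS : IsPrimeFilter S) :
    IsLatFilter {x : A | g x ∉ S} := by
  obtain ⟨⟨_, hup, _⟩, hbot, hprime⟩ := hS
  refine ⟨⟨⊤, ?_⟩, ?_, ?_⟩
  · show g ⊤ ∉ S
    rw [h1]; exact hbot
  · intro x y hx hxy hy
    apply hx
    have e := h3 x y
    rw [inf_eq_left.mpr hxy] at e
    exact hup _ _ hy (by rw [e]; exact le_sup_right)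
  · intro x y hx hy hxy
    rw [h3] at hxy
    exact (hprime _ _ hxy).elim hx hy

theorem stmt5 {A : Type*} [HeytingAlgebra A] (g h f p : A → A)
    (H : IsTenseH g h f p) (S : Set A) (hS : IsPrimeFilter S) :
    IsLatFilter {x : A | g x ∉ S} ∧ IsLatFilter {x : A | h x ∉ S} := by
  exact ⟨stmt5_aux g H.t1g H.t3g S hS, stmt5_aux h H.t1h H.t3h S hS⟩
end

section
/- Let (A, g, h, f, p) be a tense H-algebra and let F be a filter of A. Then F is a negative tense filter if and only if for every u ∈ {g, h, f, p} and all x, y ∈ A: (x ⇨ y) ⊓ (y ⇨ x) ∈ F implies (u(x) ⇨ u(y)) ⊓ (u(y) ⇨ u(x)) ∈ F. -/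
theorem stmt6 {A : Type*} [HeytingAlgebra A] (g h f p : A → A)
    (H : IsTenseH g h f p) (F : Set A) (hF : IsLatFilter F) :
    IsNegTenseFilter g h f p F ↔
      ∀ u ∈ ({g, h, f, p} : Set (A → A)), ∀ x y : A,
        (x ⇨ y) ⊓ (y ⇨ x) ∈ F → (u x ⇨ u y) ⊓ (u y ⇨ u x) ∈ F := by
  have anti : ∀ u ∈ ({g, h, f, p} : Set (A → A)), ∀ a b : A, a ≤ b → u b ≤ u a := by
    rintro u (rfl | rfl | rfl | rfl) a b hab
    · have := H.t3g a b
      rw [inf_eq_left.mpr hab] at this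
      rw [this]; exact le_sup_right
    · have := H.t3h a b
      rw [inf_eq_left.mpr hab] at this
      rw [this]; exact le_sup_right
    · have := H.t4f a b
      rw [sup_eq_right.mpr hab] at this
      rw [this]; exact inf_le_left
    · have := H.t4p a b
      rw [sup_eq_right.mpr hab] at this
      rw [this]; exact inf_le_left
  obtain ⟨_, hup, hinf⟩ := id hF
  constructor
  · rintro ⟨_, hN⟩ u hu x y hxy
    exact hinf _ _ (hN u hu y x (hup _ _ hxy inf_le_right))
      (hN u hu x y (hup _ _ hxy inf_le_left))
  · intro hC
    refine ⟨hF, fun u hu x y hxy => ?_⟩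
    have h1 := hC u hu x (x ⊓ y) (hup _ _ hxy (le_inf (by rw [himp_inf_distrib, himp_self, top_inf_eq]) (by rw [himp_eq_top_iff.mpr inf_le_left]; exact le_top)))
    exact hup _ _ h1 (inf_le_right.trans (himp_le_himp_right (anti u hu _ _ inf_le_right)))
end

section
/- Let (A, g, h, f, p) be a tense H-algebra and let F be a filter of A. Then F is a negative tense filter if and only if the following four conditions hold for all x, y ∈ A: (a) g(x) ⇨ y ∈ F implies h(y) ⇨ x ∈ F; (b) h(x) ⇨ y ∈ F implies g(y) ⇨ x ∈ F; (c) x ⇨ p(y) ∈ F implies y ⇨ f(x) ∈ F; (d) x ⇨ f(y) ∈ F implies y ⇨ p(x) ∈ F. -/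
theorem stmt7 {A : Type*} [HeytingAlgebra A] (g h f p : A → A)
    (H : IsTenseH g h f p) (F : Set A) (hF : IsLatFilter F) :
    IsNegTenseFilter g h f p F ↔
      ((∀ x y : A, g x ⇨ y ∈ F → h y ⇨ x ∈ F) ∧
        (∀ x y : A, h x ⇨ y ∈ F → g y ⇨ x ∈ F) ∧
        (∀ x y : A, x ⇨ p y ∈ F → y ⇨ f x ∈ F) ∧
        (∀ x y : A, x ⇨ f y ∈ F → y ⇨ p x ∈ F)) := by
  obtain ⟨_, up, _⟩ := id hF
  constructor
  · rintro ⟨_, hu⟩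
    have hg := hu g (by simp)
    have hh := hu h (by simp)
    have hf := hu f (by simp)
    have hp := hu p (by simp)
    refine ⟨fun x y m => ?_, fun x y m => ?_, fun x y m => ?_, fun x y m => ?_⟩
    · exact up _ _ (hh _ _ m) (himp_le_himp_left (H.t5hg x))
    · exact up _ _ (hg _ _ m) (himp_le_himp_left (H.t5gh x))
    · exact up _ _ (hf _ _ m) (himp_le_himp_right (H.t6fp y))
    · exact up _ _ (hp _ _ m) (himp_le_himp_right (H.t6pf y))
  · rintro ⟨a, b, c, d⟩
    refine ⟨hF, ?_⟩
    rintro u (rfl | rfl | rfl | rfl) x y m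
    · exact b _ _ (up _ _ m (himp_le_himp_right (H.t5hg x)))
    · exact a _ _ (up _ _ m (himp_le_himp_right (H.t5gh x)))
    · exact c _ _ (up _ _ m (himp_le_himp_left (H.t6pf y)))
    · exact d _ _ (up _ _ m (himp_le_himp_left (H.t6fp y)))
end

section
/- Let (A, g, h, f, p) be a tense H-algebra and let F be a negative tense filter of A. Define the relation θ_F on A by (x, y) ∈ θ_F if and only if (x ⇨ y) ⊓ (y ⇨ x) ∈ F. Then θ_F is an equivalence relation on A that is compatible with ⊓, ⊔, ⇨, g, h, f and p (i.e., if (x₁,y₁), (x₂,y₂) ∈ θ_F then (x₁ ⊓ x₂, y₁ ⊓ y₂), (x₁ ⊔ x₂, y₁ ⊔ y₂), (x₁ ⇨ x₂, y₁ ⇨ y₂) ∈ θ_F, and if (x,y) ∈ θ_F then (u(x), u(y)) ∈ θ_F for each u ∈ {g,h,f,p}). -/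
theorem thetaF_iff_aux {A : Type*} [HeytingAlgebra A] {F : Set A} (hF : IsLatFilter F) (x y : A) :
    thetaF F x y ↔ ∃ d ∈ F, d ⊓ x ≤ y ∧ d ⊓ y ≤ x := by
  constructor
  · intro h
    exact ⟨_, h, le_himp_iff.1 inf_le_left, le_himp_iff.1 inf_le_right⟩
  · rintro ⟨d, hd, h1, h2⟩
    exact hF.2.1 d _ hd (le_inf (le_himp_iff.2 h1) (le_himp_iff.2 h2))

theorem himp_aux {A : Type*} [HeytingAlgebra A] {d e x₁ x₂ y₁ y₂ : A}
    (h1 : d ⊓ y₁ ≤ x₁) (h2 : e ⊓ x₂ ≤ y₂) : (d ⊓ e) ⊓ (x₁ ⇨ x₂) ≤ y₁ ⇨ y₂ := by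
  rw [le_himp_iff]
  have a1 : d ⊓ e ⊓ (x₁ ⇨ x₂) ⊓ y₁ ≤ x₁ :=
    le_trans (le_inf (inf_le_left.trans (inf_le_left.trans inf_le_left)) inf_le_right) h1
  have a2 : d ⊓ e ⊓ (x₁ ⇨ x₂) ⊓ y₁ ≤ x₂ :=
    le_trans (le_inf (inf_le_left.trans inf_le_right) a1) himp_inf_le
  exact le_trans (le_inf (inf_le_left.trans (inf_le_left.trans inf_le_right)) a2) h2

theorem inf_aux {A : Type*} [HeytingAlgebra A] {d e x₁ x₂ y₁ y₂ : A}
    (h1 : d ⊓ x₁ ≤ y₁) (h2 : e ⊓ x₂ ≤ y₂) : (d ⊓ e) ⊓ (x₁ ⊓ x₂) ≤ y₁ ⊓ y₂ :=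
  le_inf ((inf_le_inf inf_le_left inf_le_left).trans h1)
    ((inf_le_inf inf_le_right inf_le_right).trans h2)

theorem sup_aux {A : Type*} [HeytingAlgebra A] {d e x₁ x₂ y₁ y₂ : A}
    (h1 : d ⊓ x₁ ≤ y₁) (h2 : e ⊓ x₂ ≤ y₂) : (d ⊓ e) ⊓ (x₁ ⊔ x₂) ≤ y₁ ⊔ y₂ := by
  rw [inf_sup_left]
  exact sup_le_sup ((inf_le_inf_right _ inf_le_left).trans h1)
    ((inf_le_inf_right _ inf_le_right).trans h2)

theorem trans_aux {A : Type*} [HeytingAlgebra A] {d e x y z : A}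
    (h1 : d ⊓ x ≤ y) (h2 : e ⊓ y ≤ z) : (d ⊓ e) ⊓ x ≤ z :=
  le_trans (le_inf (inf_le_left.trans inf_le_right)
    ((inf_le_inf_right _ inf_le_left).trans h1)) h2

theorem stmt8 {A : Type*} [HeytingAlgebra A] (g h f p : A → A)
    (H : IsTenseH g h f p) (F : Set A) (hF : IsNegTenseFilter g h f p F) :
    IsTenseCongruence g h f p (thetaF F) := by
  obtain ⟨hL, hu⟩ := hF
  have hi := thetaF_iff_aux hL
  refine ⟨⟨?_, ?_, ?_⟩, ?_, ?_, ?_, ?_⟩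
  · intro x
    obtain ⟨d, hd⟩ := hL.1
    exact (hi _ _).2 ⟨d, hd, inf_le_right, inf_le_right⟩
  · intro x y hxy
    obtain ⟨d, hd, h1, h2⟩ := (hi _ _).1 hxy
    exact (hi _ _).2 ⟨d, hd, h2, h1⟩
  · intro x y z hxy hyz
    obtain ⟨d, hd, h1, h2⟩ := (hi _ _).1 hxy
    obtain ⟨e, he, h3, h4⟩ := (hi _ _).1 hyz
    refine (hi _ _).2 ⟨d ⊓ e, hL.2.2 _ _ hd he, trans_aux h1 h3, ?_⟩
    rw [inf_comm d e]
    exact trans_aux h4 h2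
  · intro x₁ y₁ x₂ y₂ hx hy
    obtain ⟨d, hd, h1, h2⟩ := (hi _ _).1 hx
    obtain ⟨e, he, h3, h4⟩ := (hi _ _).1 hy
    exact (hi _ _).2 ⟨d ⊓ e, hL.2.2 _ _ hd he, inf_aux h1 h3, inf_aux h2 h4⟩
  · intro x₁ y₁ x₂ y₂ hx hy
    obtain ⟨d, hd, h1, h2⟩ := (hi _ _).1 hx
    obtain ⟨e, he, h3, h4⟩ := (hi _ _).1 hy
    exact (hi _ _).2 ⟨d ⊓ e, hL.2.2 _ _ hd he, sup_aux h1 h3, sup_aux h2 h4⟩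
  · intro x₁ y₁ x₂ y₂ hx hy
    obtain ⟨d, hd, h1, h2⟩ := (hi _ _).1 hx
    obtain ⟨e, he, h3, h4⟩ := (hi _ _).1 hy
    exact (hi _ _).2 ⟨d ⊓ e, hL.2.2 _ _ hd he, himp_aux h2 h3, himp_aux h1 h4⟩
  · intro u hmem x y hxy
    exact hL.2.2 _ _ (hu u hmem y x (hL.2.1 _ _ hxy inf_le_right))
      (hu u hmem x y (hL.2.1 _ _ hxy inf_le_left))
end

section
/- Let (A, g, h, f, p) be a tense H-algebra and let θ be a congruence on (A, g, h, f, p), i.e. an equivalence relation on A compatible with ⊓, ⊔, ⇨, g, h, f and p. Then the equivalence class of 1, namely [1]_θ = {x ∈ A : (x, 1) ∈ θ}, is a negative tense filter of A. -/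
theorem stmt9 {A : Type*} [HeytingAlgebra A] (g h f p : A → A)
    (H : IsTenseH g h f p) (θ : A → A → Prop)
    (hθ : IsTenseCongruence g h f p θ) :
    IsNegTenseFilter g h f p {x : A | θ x ⊤} := by
  obtain ⟨he, hi, hs, himp, hu⟩ := hθ
  have anti : ∀ u ∈ ({g, h, f, p} : Set (A → A)), ∀ x y : A, u y ≤ u (x ⊓ y) := by
    have inf_case : ∀ u : A → A, (∀ x y : A, u (x ⊓ y) = u x ⊔ u y) →
        ∀ x y : A, u y ≤ u (x ⊓ y) := by
      intro u k x y
      rw [k]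
      exact le_sup_right
    have sup_case : ∀ u : A → A, (∀ x y : A, u (x ⊔ y) = u x ⊓ u y) →
        ∀ x y : A, u y ≤ u (x ⊓ y) := by
      intro u k x y
      have e := k (x ⊓ y) y
      rw [sup_eq_right.mpr inf_le_right] at e
      rw [e]
      exact inf_le_left
    intro u hm
    simp only [Set.mem_insert_iff, Set.mem_singleton_iff] at hm
    rcases hm with rfl | rfl | rfl | rfl
    · exact inf_case _ H.t3g
    · exact inf_case _ H.t3h
    · exact sup_case _ H.t4f
    · exact sup_case _ H.t4p
  refine ⟨⟨⟨⊤, he.refl ⊤⟩, ?_, ?_⟩, ?_⟩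
  · intro x y hx hxy
    have k := hs x ⊤ y y hx (he.refl y)
    rw [sup_eq_right.mpr hxy, top_sup_eq] at k
    exact k
  · intro x y hx hy
    have k := hi x ⊤ y ⊤ hx hy
    rw [top_inf_eq] at k
    exact k
  · intro u hm x y hxy
    have k := hi x x (x ⇨ y) ⊤ (he.refl x) hxy
    rw [inf_himp, inf_top_eq] at k
    have k2 := himp _ _ _ _ (he.refl (u y)) (hu u hm _ _ k)
    rw [himp_eq_top_iff.mpr (anti u hm x y)] at k2
    exact he.symm k2
end

section
/- Let A be a Heyting algebra, let u : A → A be antitone (x ≤ y implies u(y) ≤ u(x)), and let a ∈ A. Then an element z ∈ A is a lower bound of the set {(u(b) ⇨ u(c)) ⊓ (u(c) ⇨ u(b)) : b, c ∈ A with a ≤ (b ⇨ c) ⊓ (c ⇨ b)} if and only if z is a lower bound of the set {u(a ⊓ b) ⇨ u(b) : b ∈ A}. In particular, whenever one of the two sets has an infimum, so does the other, and the infima coincide. -/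
theorem stmt11 {A : Type*} [HeytingAlgebra A] (u : A → A)
    (hu : ∀ x y : A, x ≤ y → u y ≤ u x) (a : A) :
    (∀ z : A,
        z ∈ lowerBounds {w : A | ∃ b c : A,
            a ≤ (b ⇨ c) ⊓ (c ⇨ b) ∧ w = (u b ⇨ u c) ⊓ (u c ⇨ u b)} ↔
          z ∈ lowerBounds {w : A | ∃ b : A, w = u (a ⊓ b) ⇨ u b}) ∧
    (∀ i : A,
        IsGLB {w : A | ∃ b c : A,
            a ≤ (b ⇨ c) ⊓ (c ⇨ b) ∧ w = (u b ⇨ u c) ⊓ (u c ⇨ u b)} i ↔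
          IsGLB {w : A | ∃ b : A, w = u (a ⊓ b) ⇨ u b} i) := by
  have key : ∀ z : A,
        z ∈ lowerBounds {w : A | ∃ b c : A,
            a ≤ (b ⇨ c) ⊓ (c ⇨ b) ∧ w = (u b ⇨ u c) ⊓ (u c ⇨ u b)} ↔
          z ∈ lowerBounds {w : A | ∃ b : A, w = u (a ⊓ b) ⇨ u b} := by
    intro z
    constructor
    · rintro hz w ⟨b, rfl⟩
      refine le_trans (hz ⟨a ⊓ b, b, ?_, rfl⟩) inf_le_left
      refine le_inf ?_ ?_
      · rw [le_himp_iff]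
        exact inf_le_right.trans inf_le_right
      · rw [le_himp_iff]
    · rintro hz w ⟨b, c, h, rfl⟩
      have h1 : a ⊓ b ≤ c := le_himp_iff.1 (h.trans inf_le_left)
      have h2 : a ⊓ c ≤ b := le_himp_iff.1 (h.trans inf_le_right)
      refine le_inf ?_ ?_
      · exact (hz ⟨c, rfl⟩).trans (himp_le_himp_right (hu _ _ h2))
      · exact (hz ⟨b, rfl⟩).trans (himp_le_himp_right (hu _ _ h1))
  refine ⟨key, fun i => ?_⟩
  unfold IsGLB
  rw [Set.ext key]
end

section
/- Let (A, g, h, f, p) be a tense H-algebra and a ∈ A. Then ¬g(a) is the greatest lower bound of the set {g(a ⊓ b) ⇨ g(b) : b ∈ A}, and ¬h(a) is the greatest lower bound of the set {h(a ⊓ b) ⇨ h(b) : b ∈ A}; here ¬x denotes x ⇨ 0. -/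
theorem stmt12 {A : Type*} [HeytingAlgebra A] (g h f p : A → A)
    (H : IsTenseH g h f p) (a : A) :
    IsGLB {w : A | ∃ b : A, w = g (a ⊓ b) ⇨ g b} (g a ⇨ ⊥) ∧
      IsGLB {w : A | ∃ b : A, w = h (a ⊓ b) ⇨ h b} (h a ⇨ ⊥) := by
  have key : ∀ u : A → A, u ⊤ = ⊥ → (∀ x y : A, u (x ⊓ y) = u x ⊔ u y) →
      IsGLB {w : A | ∃ b : A, w = u (a ⊓ b) ⇨ u b} (u a ⇨ ⊥) := by
    intro u h1 h3
    constructor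
    · rintro w ⟨b, rfl⟩
      rw [h3, le_himp_iff, inf_sup_left]
      refine sup_le ?_ inf_le_right
      exact himp_inf_le.trans bot_le
    · intro c hc
      have := hc ⟨⊤, rfl⟩
      rwa [inf_top_eq, h1] at this
  exact ⟨key g H.t1g H.t3g, key h H.t1h H.t3h⟩
end

section
/- Let (A, g, h, f, p) be a tense H-algebra and a ∈ A. Then ¬g(a) ⊓ ¬h(a) is the greatest lower bound of the set {u(a ⊓ b) ⇨ u(b) : b ∈ A, u ∈ {f, g, h, p}}; here ¬x denotes x ⇨ 0. In particular, ¬g(a) ≤ f(a ⊓ b) ⇨ f(b) and ¬h(a) ≤ p(a ⊓ b) ⇨ p(b) for every b ∈ A. -/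
theorem stmt13 {A : Type*} [HeytingAlgebra A] (g h f p : A → A)
    (H : IsTenseH g h f p) (a : A) :
    IsGLB {w : A | ∃ u ∈ ({f, g, h, p} : Set (A → A)), ∃ b : A, w = u (a ⊓ b) ⇨ u b}
        ((g a ⇨ ⊥) ⊓ (h a ⇨ ⊥)) ∧
      (∀ b : A, (g a ⇨ ⊥) ≤ f (a ⊓ b) ⇨ f b) ∧
      (∀ b : A, (h a ⇨ ⊥) ≤ p (a ⊓ b) ⇨ p b) := by
  have key : ∀ x y z : A, z ≤ y ⊔ x → (x ⇨ ⊥) ≤ z ⇨ y := by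
    intro x y z hz
    rw [le_himp_iff]
    refine (inf_le_inf_left _ hz).trans ?_
    rw [inf_sup_left]
    refine sup_le inf_le_right ?_
    rw [himp_inf_self, bot_inf_eq]
    exact bot_le
  have hf : ∀ b : A, (g a ⇨ ⊥) ≤ f (a ⊓ b) ⇨ f b := fun b =>
    key _ _ _ (by rw [inf_comm]; exact H.t8f b a)
  have hp : ∀ b : A, (h a ⇨ ⊥) ≤ p (a ⊓ b) ⇨ p b := fun b =>
    key _ _ _ (by rw [inf_comm]; exact H.t8p b a)
  refine ⟨⟨?_, ?_⟩, hf, hp⟩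
  · rintro w ⟨u, hu, b, rfl⟩
    simp only [Set.mem_insert_iff, Set.mem_singleton_iff] at hu
    rcases hu with rfl | rfl | rfl | rfl
    · exact inf_le_left.trans (hf b)
    · exact inf_le_left.trans (key _ _ _ (by rw [inf_comm, H.t3g]))
    · exact inf_le_right.trans (key _ _ _ (by rw [inf_comm, H.t3h]))
    · exact inf_le_right.trans (hp b)
  · intro c hc
    refine le_inf (hc ⟨g, by simp, ⊤, ?_⟩) (hc ⟨h, by simp, ⊤, ?_⟩)
    · rw [inf_top_eq, H.t1g]
    · rw [inf_top_eq, H.t1h]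
end

section
/- Let (A, g, h, f, p) be a tense H-algebra and define [N](a) = ¬g(a) ⊓ ¬h(a), where ¬x denotes x ⇨ 0. Then a filter F of A is a negative tense filter if and only if F is closed under [N], i.e. a ∈ F implies [N](a) ∈ F. -/
theorem stmt14 {A : Type*} [HeytingAlgebra A] (g h f p : A → A)
    (H : IsTenseH g h f p) (F : Set A) (hF : IsLatFilter F) :
    IsNegTenseFilter g h f p F ↔
      ∀ a : A, a ∈ F → (g a ⇨ ⊥) ⊓ (h a ⇨ ⊥) ∈ F := by
  obtain ⟨hne, hup, hinf⟩ := hF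
  constructor
  · rintro ⟨-, hu⟩ a ha
    have ha' : (⊤ : A) ⇨ a ∈ F := by rwa [top_himp]
    have h1 := hu g (by simp) ⊤ a ha'
    have h2 := hu h (by simp) ⊤ a ha'
    rw [H.t1g] at h1
    rw [H.t1h] at h2
    exact hinf _ _ h1 h2
  · intro hN
    refine ⟨⟨hne, hup, hinf⟩, ?_⟩
    have key : ∀ a b c : A, b ≤ c ⊔ a → a ⇨ ⊥ ≤ b ⇨ c := by
      intro a b c hb
      rw [le_himp_iff]
      calc (a ⇨ ⊥) ⊓ b ≤ (a ⇨ ⊥) ⊓ (c ⊔ a) := inf_le_inf_left _ hb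
        _ = ((a ⇨ ⊥) ⊓ c) ⊔ ((a ⇨ ⊥) ⊓ a) := inf_sup_left _ _ _
        _ ≤ c := sup_le inf_le_right (himp_inf_le.trans bot_le)
    have antiM : ∀ u : A → A, (∀ x y, u (x ⊓ y) = u x ⊔ u y) → ∀ x y, x ≤ y → u y ≤ u x := by
      intro u hu x y hxy
      have := hu x y
      rw [inf_eq_left.2 hxy] at this
      rw [this]; exact le_sup_right
    have antiJ : ∀ u : A → A, (∀ x y, u (x ⊔ y) = u x ⊓ u y) → ∀ x y, x ≤ y → u y ≤ u x := by
      intro u hu x y hxy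
      have := hu x y
      rw [sup_eq_right.2 hxy] at this
      rw [this]; exact inf_le_left
    intro u hu x y hxy
    have hle : x ⊓ (x ⇨ y) ≤ y := inf_himp_le
    have hg := hup _ _ (hN _ hxy) inf_le_left
    have hh := hup _ _ (hN _ hxy) inf_le_right
    simp only [Set.mem_insert_iff, Set.mem_singleton_iff] at hu
    rcases hu with rfl | rfl | rfl | rfl
    · exact hup _ _ hg (key _ _ _ ((antiM _ H.t3g _ _ hle).trans (H.t3g _ _).le))
    · exact hup _ _ hh (key _ _ _ ((antiM _ H.t3h _ _ hle).trans (H.t3h _ _).le))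
    · exact hup _ _ hg (key _ _ _ ((antiJ _ H.t4f _ _ hle).trans (H.t8f _ _)))
    · exact hup _ _ hh (key _ _ _ ((antiJ _ H.t4p _ _ hle).trans (H.t8p _ _)))
end

section
/- Let (A, g, h, f, p) be a tense H-algebra, define [N](a) = ¬g(a) ⊓ ¬h(a) (where ¬x = x ⇨ 0), let [N]⁰(a) = a, [N]ⁿ⁺¹(a) = [N]([N]ⁿ(a)), and [N]⁽ᵏ⁾(a) = [N]⁰(a) ⊓ [N]¹(a) ⊓ ⋯ ⊓ [N]ᵏ(a). Let X be a nonempty subset of A. Then the smallest negative tense filter of A containing X equals { y ∈ A : there exist n ≥ 1, x₁, …, xₙ ∈ X and k ∈ ℕ such that [N]⁽ᵏ⁾(x₁ ⊓ ⋯ ⊓ xₙ) ≤ y }. -/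
theorem aux_anti {A : Type*} [HeytingAlgebra A] {g : A → A}
    (H : ∀ x y : A, g (x ⊓ y) = g x ⊔ g y) {x y : A} (hxy : x ≤ y) : g y ≤ g x := by
  have := H x y
  rw [inf_eq_left.2 hxy] at this
  rw [this]; exact le_sup_right

theorem aux_anti2 {A : Type*} [HeytingAlgebra A] {f : A → A}
    (H : ∀ x y : A, f (x ⊔ y) = f x ⊓ f y) {x y : A} (hxy : x ≤ y) : f y ≤ f x := by
  have := H x y
  rw [sup_eq_right.2 hxy] at this
  rw [this]; exact inf_le_left

section
variable {A : Type*} [HeytingAlgebra A] {g h f p : A → A}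

theorem aux_mono (H : IsTenseH g h f p) {x y : A} (hxy : x ≤ y) :
    Nop g h x ≤ Nop g h y :=
  inf_le_inf (himp_le_himp_right (aux_anti H.t3g hxy)) (himp_le_himp_right (aux_anti H.t3h hxy))

theorem aux_inf (H : IsTenseH g h f p) (x y : A) :
    Nop g h x ⊓ Nop g h y ≤ Nop g h (x ⊓ y) := by
  unfold Nop
  rw [H.t3g, H.t3h, sup_himp_distrib, sup_himp_distrib]
  exact (inf_inf_inf_comm _ _ _ _).le

theorem aux_iter (H : IsTenseH g h f p) (n : ℕ) {x y : A} (hxy : x ≤ y) :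
    NIter (Nop g h) n x ≤ NIter (Nop g h) n y := by
  induction n with
  | zero => exact hxy
  | succ n ih => exact aux_mono H ih

theorem aux_par (H : IsTenseH g h f p) (n : ℕ) {x y : A} (hxy : x ≤ y) :
    NPar (Nop g h) n x ≤ NPar (Nop g h) n y := by
  induction n with
  | zero => exact hxy
  | succ n ih => exact inf_le_inf ih (aux_iter H _ hxy)

theorem aux_par_anti (N : A → A) (a : A) : Antitone (fun k => NPar N k a) :=
  antitone_nat_of_succ_le (fun _ => inf_le_left)

theorem aux_step (H : IsTenseH g h f p) (k : ℕ) (a : A) :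
    NPar (Nop g h) (k + 1) a ≤ Nop g h (NPar (Nop g h) k a) := by
  induction k with
  | zero => exact inf_le_right
  | succ k ih => exact (inf_le_inf ih le_rfl).trans (aux_inf H _ _)

theorem aux_key {c x a b e : A} (h1 : a ≤ b ⊔ e) (hc : c ≤ e ⇨ ⊥) : c ≤ a ⇨ b := by
  rw [le_himp_iff] at *
  calc c ⊓ a ≤ c ⊓ (b ⊔ e) := inf_le_inf le_rfl h1
    _ = c ⊓ b ⊔ c ⊓ e := inf_sup_left _ _ _
    _ ≤ b := sup_le inf_le_right (hc.trans bot_le)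

theorem aux_u (H : IsTenseH g h f p) {u : A → A} (hu : u ∈ ({g, h, f, p} : Set (A → A)))
    (x y : A) : Nop g h (x ⇨ y) ≤ u y ⇨ u x := by
  have hxy : x ⊓ (x ⇨ y) ≤ y := inf_himp_le
  rcases hu with rfl | rfl | rfl | rfl
  · exact aux_key (x := x) ((aux_anti H.t3g hxy).trans (H.t3g _ _).le) inf_le_left
  · exact aux_key (x := x) ((aux_anti H.t3h hxy).trans (H.t3h _ _).le) inf_le_right
  · exact aux_key (x := x) ((aux_anti2 H.t4f hxy).trans (H.t8f _ _)) inf_le_left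
  · exact aux_key (x := x) ((aux_anti2 H.t4p hxy).trans (H.t8p _ _)) inf_le_right

theorem aux_app (l m : List A) :
    (l ++ m).foldr (· ⊓ ·) ⊤ = l.foldr (· ⊓ ·) ⊤ ⊓ m.foldr (· ⊓ ·) ⊤ := by
  induction l with
  | nil => simp
  | cons a l ih => simp only [List.cons_append, List.foldr_cons, ih, inf_assoc]

theorem aux_N_mem (H : IsTenseH g h f p) {F : Set A} (hF : IsNegTenseFilter g h f p F)
    {a : A} (ha : a ∈ F) : Nop g h a ∈ F := by
  obtain ⟨⟨_, _, hi⟩, hu⟩ := hF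
  have h1 := hu g (by simp) ⊤ a (by simpa using ha)
  have h2 := hu h (by simp) ⊤ a (by simpa using ha)
  rw [H.t1g] at h1
  rw [H.t1h] at h2
  exact hi _ _ h1 h2

theorem aux_iter_mem (H : IsTenseH g h f p) {F : Set A} (hF : IsNegTenseFilter g h f p F)
    {a : A} (ha : a ∈ F) (n : ℕ) : NIter (Nop g h) n a ∈ F := by
  induction n with
  | zero => exact ha
  | succ n ih => exact aux_N_mem H hF ih

theorem aux_par_mem (H : IsTenseH g h f p) {F : Set A} (hF : IsNegTenseFilter g h f p F)
    {a : A} (ha : a ∈ F) (n : ℕ) : NPar (Nop g h) n a ∈ F := by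
  induction n with
  | zero => exact ha
  | succ n ih => exact hF.1.2.2 _ _ ih (aux_iter_mem H hF ha _)

theorem aux_fold_mem {F : Set A} (hF : IsLatFilter F) (l : List A) (hl : ∀ x ∈ l, x ∈ F) :
    l.foldr (· ⊓ ·) ⊤ ∈ F := by
  induction l with
  | nil =>
    obtain ⟨⟨z, hz⟩, hup, _⟩ := hF
    exact hup z _ hz le_top
  | cons a l ih =>
    exact hF.2.2 _ _ (hl a (by simp)) (ih fun x hx => hl x (by simp [hx]))

end

theorem stmt15 {A : Type*} [HeytingAlgebra A] (g h f p : A → A)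
    (H : IsTenseH g h f p) (X : Set A) (hX : X.Nonempty) :
    IsNegTenseFilter g h f p
        {y : A | ∃ l : List A, l ≠ [] ∧ (∀ x ∈ l, x ∈ X) ∧
          ∃ k : ℕ, NPar (Nop g h) k (l.foldr (· ⊓ ·) ⊤) ≤ y} ∧
      X ⊆ {y : A | ∃ l : List A, l ≠ [] ∧ (∀ x ∈ l, x ∈ X) ∧
          ∃ k : ℕ, NPar (Nop g h) k (l.foldr (· ⊓ ·) ⊤) ≤ y} ∧
      ∀ F : Set A, IsNegTenseFilter g h f p F → X ⊆ F →
        {y : A | ∃ l : List A, l ≠ [] ∧ (∀ x ∈ l, x ∈ X) ∧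
          ∃ k : ℕ, NPar (Nop g h) k (l.foldr (· ⊓ ·) ⊤) ≤ y} ⊆ F := by
  have hsub : X ⊆ {y : A | ∃ l : List A, l ≠ [] ∧ (∀ x ∈ l, x ∈ X) ∧
          ∃ k : ℕ, NPar (Nop g h) k (l.foldr (· ⊓ ·) ⊤) ≤ y} := by
    intro x hx
    exact ⟨[x], by simp, by simpa using hx, 0, by simp [NPar, NIter]⟩
  refine ⟨⟨⟨hX.mono hsub, ?_, ?_⟩, ?_⟩, hsub, ?_⟩
  · rintro x y ⟨l, h0, hl, k, hk⟩ hxy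
    exact ⟨l, h0, hl, k, hk.trans hxy⟩
  · rintro x y ⟨l, h0, hl, k, hk⟩ ⟨m, _, hm, j, hj⟩
    refine ⟨l ++ m, by simp [h0], ?_, max k j, ?_⟩
    · intro z hz
      rcases List.mem_append.1 hz with hz | hz
      exacts [hl z hz, hm z hz]
    · rw [aux_app]
      exact le_inf
        (((aux_par_anti _ _ (le_max_left k j)).trans (aux_par H k inf_le_left)).trans hk)
        (((aux_par_anti _ _ (le_max_right k j)).trans (aux_par H j inf_le_right)).trans hj)
  · rintro u hu x y ⟨l, h0, hl, k, hk⟩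
    exact ⟨l, h0, hl, k + 1, (aux_step H k _).trans ((aux_mono H hk).trans (aux_u H hu x y))⟩
  · rintro F hF hXF y ⟨l, _, hl, k, hk⟩
    exact hF.1.2.1 _ _ (aux_par_mem H hF (aux_fold_mem hF.1 l fun x hx => hXF (hl x hx)) k) hk
end

section
/- Let (A, g, h, f, p) be a tense H-algebra and let S, T be prime filters of A. Then the following are equivalent: (a) for all x, f(x) ∈ S implies x ∉ T, and for all x, x ∉ T implies g(x) ∈ S; (b) for all x, p(x) ∈ T implies x ∉ S, and for all x, x ∉ S implies h(x) ∈ T. -/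
theorem stmt17 {A : Type*} [HeytingAlgebra A] (g h f p : A → A)
    (H : IsTenseH g h f p) (S T : Set A)
    (hS : IsPrimeFilter S) (hT : IsPrimeFilter T) :
    ((∀ x : A, f x ∈ S → x ∉ T) ∧ (∀ x : A, x ∉ T → g x ∈ S)) ↔
      ((∀ x : A, p x ∈ T → x ∉ S) ∧ (∀ x : A, x ∉ S → h x ∈ T)) := by
  constructor
  · rintro ⟨h1, h2⟩
    refine ⟨fun x hp hx => h1 (p x) (hS.1.2.1 _ _ hx (H.t6fp x)) hp, fun x hx => ?_⟩
    by_contra hh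
    exact hx (hS.1.2.1 _ _ (h2 _ hh) (H.t5gh x))
  · rintro ⟨h1, h2⟩
    refine ⟨fun x hf hx => h1 (f x) (hT.1.2.1 _ _ hx (H.t6pf x)) hf, fun x hx => ?_⟩
    by_contra hh
    exact hx (hT.1.2.1 _ _ (h2 _ hh) (H.t5hg x))
end

section
/- Let (A, g, h, f, p) be a tense H-algebra, let S be a prime filter of A and a ∈ A. Define, for prime filters S, T: R_A(S, T) if and only if (for all x, f(x) ∈ S implies x ∉ T) and (for all x, x ∉ T implies g(x) ∈ S). Then g(a) ∉ S if and only if for every prime filter T of A with R_A(S, T), one has a ∈ T. -/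
theorem stmt18 {A : Type*} [HeytingAlgebra A] (g h f p : A → A)
    (H : IsTenseH g h f p) (S : Set A) (hS : IsPrimeFilter S) (a : A) :
    g a ∉ S ↔
      ∀ T : Set A, IsPrimeFilter T →
        ((∀ x : A, f x ∈ S → x ∉ T) ∧ (∀ x : A, x ∉ T → g x ∈ S)) → a ∈ T := by
  obtain ⟨⟨⟨s0, hs0⟩, hup, hinf⟩, hbot, hpr⟩ := hS
  have gan : ∀ x y : A, x ≤ y → g y ≤ g x := by
    intro x y hxy
    have := H.t3g x y
    rw [inf_eq_left.2 hxy] at this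
    rw [this]; exact le_sup_right
  constructor
  · intro hga T _ hR
    by_contra hT
    exact hga (hR.2 a hT)
  · intro hall hga
    let F : Order.PFilter A := Order.IsPFilter.toPFilter (F := {x : A | g x ∉ S})
      (Order.IsPFilter.of_def ⟨⊤, by simpa [H.t1g] using hbot⟩
        (by
          intro x hx y hy
          refine ⟨x ⊓ y, ?_, inf_le_left, inf_le_right⟩
          intro hc
          rw [H.t3g] at hc
          exact (hpr _ _ hc).elim hx hy)
        (by
          intro x y hxy hx hc
          exact hx (hup _ _ hc (gan _ _ hxy))))
    let J : Order.Ideal A := Order.IsIdeal.toIdeal (I := {x : A | ∃ i, f i ∈ S ∧ x ≤ i ⊔ a})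
      { IsLowerSet := by
          rintro x y hxy ⟨i, hi, hx⟩
          exact ⟨i, hi, hxy.trans hx⟩
        Nonempty := ⟨⊥, ⊥, by rw [H.t2f]; exact hup _ _ hs0 le_top, bot_le⟩
        Directed := by
          rintro x ⟨i, hi, hx⟩ y ⟨j, hj, hy⟩
          refine ⟨x ⊔ y, ⟨i ⊔ j, ?_, ?_⟩, le_sup_left, le_sup_right⟩
          · rw [H.t4f]; exact hinf _ _ hi hj
          · exact sup_le (hx.trans (sup_le_sup_right le_sup_left a))
              (hy.trans (sup_le_sup_right le_sup_right a)) }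
    have hF : ∀ x, x ∈ F ↔ g x ∉ S := fun x => Iff.rfl
    have hJ : ∀ x, x ∈ J ↔ ∃ i, f i ∈ S ∧ x ≤ i ⊔ a := fun x => Iff.rfl
    have hFJ : Disjoint (F : Set A) (J : Set A) := by
      rw [Set.disjoint_left]
      rintro x hx ⟨i, hi, hxi⟩
      apply (hF x).1 hx
      refine hup _ _ (hinf _ _ hga hi) ((H.t7g a i).trans (gan _ _ ?_))
      rwa [sup_comm]
    obtain ⟨P, hP, hJP, hFP⟩ := DistribLattice.prime_ideal_of_disjoint_filter_ideal hFJ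
    rw [Set.disjoint_left] at hFP
    have hbS : f ⊥ ∈ S := by rw [H.t2f]; exact hup _ _ hs0 le_top
    have haP : a ∈ P := hJP ((hJ a).2 ⟨⊥, hbS, le_sup_right⟩)
    refine hall {x | x ∉ P} ⟨⟨⟨⊤, ?_⟩, ?_, ?_⟩, ?_, ?_⟩ ⟨?_, ?_⟩ haP
    · exact hFP ((hF ⊤).2 (by rw [H.t1g]; exact hbot))
    · intro x y hx hxy hy
      exact hx (P.lower hxy hy)
    · intro x y hx hy hxy
      exact (hP.mem_or_mem hxy).elim hx hy
    · intro hb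
      exact hb P.bot_mem
    · intro x y hxy
      by_contra hc
      push Not at hc
      exact hxy (Order.Ideal.sup_mem (not_not.1 hc.1) (not_not.1 hc.2))
    · intro x hx hxT
      exact hxT (hJP ((hJ x).2 ⟨x, hx, le_sup_left⟩))
    · intro x hx
      by_contra hc
      exact hFP ((hF x).2 hc) (not_not.1 hx)
end

section
/- Let (A, g, h, f, p) be a tense H-algebra, let S be a prime filter of A and a ∈ A. Define, for prime filters S, T: R_A(S, T) if and only if (for all x, f(x) ∈ S implies x ∉ T) and (for all x, x ∉ T implies g(x) ∈ S). Then f(a) ∈ S if and only if for every prime filter T of A with R_A(S, T), one has a ∉ T. -/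
theorem stmt19 {A : Type*} [HeytingAlgebra A] (g h f p : A → A)
    (H : IsTenseH g h f p) (S : Set A) (hS : IsPrimeFilter S) (a : A) :
    f a ∈ S ↔
      ∀ T : Set A, IsPrimeFilter T →
        ((∀ x : A, f x ∈ S → x ∉ T) ∧ (∀ x : A, x ∉ T → g x ∈ S)) → a ∉ T := by
  obtain ⟨⟨⟨s, hs⟩, hup, hinf⟩, hbot, hprime⟩ := hS
  refine ⟨fun ha T _ hR => hR.1 a ha, fun hT => ?_⟩
  by_contra hfa
  have fanti : ∀ x y : A, x ≤ y → f y ≤ f x := by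
    intro x y hxy
    have := H.t4f x y
    rw [sup_eq_right.2 hxy] at this
    rw [this]
    exact inf_le_left
  have hFi : Order.IsPFilter {x : A | ∃ z, g z ∉ S ∧ z ⊓ a ≤ x} := by
    apply Order.IsPFilter.of_def
    · exact ⟨⊤, ⊤, by rw [H.t1g]; exact hbot, le_top⟩
    · rintro x ⟨z, hz, hzx⟩ y ⟨w, hw, hwy⟩
      refine ⟨x ⊓ y, ⟨z ⊓ w, ?_, ?_⟩, inf_le_left, inf_le_right⟩
      · rw [H.t3g]
        intro hh
        exact (hprime _ _ hh).elim hz hw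
      · exact le_inf ((inf_le_inf_right a inf_le_left).trans hzx)
          ((inf_le_inf_right a inf_le_right).trans hwy)
    · rintro x y hxy ⟨z, hz, hzx⟩
      exact ⟨z, hz, hzx.trans hxy⟩
  have hId : Order.IsIdeal {x : A | f x ∈ S} := by
    refine ⟨fun x y hyx hx => hup _ _ hx (fanti _ _ hyx), ⟨⊥, ?_⟩, ?_⟩
    · show f ⊥ ∈ S
      rw [H.t2f]
      exact hup _ _ hs le_top
    · intro x hx y hy
      refine ⟨x ⊔ y, ?_, le_sup_left, le_sup_right⟩
      show f (x ⊔ y) ∈ S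
      rw [H.t4f]
      exact hinf _ _ hx hy
  obtain ⟨J, hJ, hIJ, hFJ⟩ := DistribLattice.prime_ideal_of_disjoint_filter_ideal
    (F := hFi.toPFilter) (I := hId.toIdeal) (by
      rw [Set.disjoint_left]
      rintro x ⟨z, hz, hzx⟩ hx
      have h1 : f x ≤ f a ⊔ g z :=
        (fanti _ _ ((inf_comm a z).le.trans hzx)).trans (H.t8f a z)
      exact (hprime _ _ (hup _ _ hx h1)).elim hfa hz)
  have hFJ' : ∀ x z, g z ∉ S → z ⊓ a ≤ x → x ∉ J := fun x z hz hzx hx =>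
    Set.disjoint_left.1 hFJ (show x ∈ hFi.toPFilter from ⟨z, hz, hzx⟩) hx
  have htop : g ⊤ ∉ S := by rw [H.t1g]; exact hbot
  refine hT {x | x ∉ J} ⟨⟨⟨⊤, hFJ' ⊤ ⊤ htop le_top⟩, ?_, ?_⟩, ?_, ?_⟩ ⟨?_, ?_⟩
    (hFJ' a ⊤ htop inf_le_right)
  · exact fun x y hx hxy hy => hx (J.lower hxy hy)
  · exact fun x y hx hy hxy => (hJ.mem_or_mem hxy).elim hx hy
  · exact fun hb => hb J.bot_mem
  · intro x y hxy
    by_contra hc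
    simp only [Set.mem_setOf_eq, not_or, not_not] at hc
    exact hxy (Order.Ideal.sup_mem hc.1 hc.2)
  · exact fun x hx hn => hn (hIJ hx)
  · intro x hx
    by_contra hg
    exact hx (hFJ' x x hg inf_le_left)
end
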